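/- For v_i > v_k > 0, γ ≥ 1, r ≥ 1, and probabilities P > P̃ > 0, P' > P̃' > 0: if G = r·P·(v_k − v_i/γ) + P̃·(v_i − v_k/γ) > 0, then G' = r·P'·(v_k/γ − v_i) + P̃'·(v_i/γ − v_k) < 0. (A pair of candidates that 'votes' to prefer a busy candidate in a lower index cannot simultaneously vote to prefer a free candidate in a lower index.) -/

import Mathlib

/-- For `v_i > v_k > 0`, `γ ≥ 1`, `r ≥ 1`, and probabilities
`P > P̃ > 0`, `P' > P̃' > 0`: if
`G = r·P·(v_k − v_i/γ) + P̃·(v_i − v_k/γ) > 0` (the pair "votes" to prefer a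
busy candidate at the lower index), then
`G' = r·P'·(v_k/γ − v_i) + P̃'·(v_i/γ − v_k) < 0` (it cannot simultaneously
vote to prefer a free candidate at the lower index). -/
theorem stmt17
    (vi vk γ r P Pt P' Pt' : ℝ)
    (hvk : 0 < vk) (hvik : vk < vi)
    (hγ : 1 ≤ γ) (hr : 1 ≤ r)
    (hPt : 0 < Pt) (hP : Pt < P)
    (hPt' : 0 < Pt') (hP' : Pt' < P')
    (hG : 0 < r * P * (vk - vi / γ) + Pt * (vi - vk / γ)) :
    r * P' * (vk / γ - vi) + Pt' * (vi / γ - vk) < 0 := by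
  have hγ0 : 0 < γ := by linarith
  have h1 : vk / γ ≤ vk := div_le_self hvk.le hγ
  have h2 : vi / γ ≤ vi := div_le_self (by linarith) hγ
  have h3 : 0 < vi - vk / γ := by linarith
  have h4 : 0 ≤ (vi - vk / γ) + (vk - vi / γ) := by linarith
  have h5 : 0 < r * P' - Pt' := by nlinarith
  have h6 := mul_pos h5 h3
  have h7 := mul_nonneg hPt'.le h4
  nlinarith
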